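/- (Key identity of Proposition 1.) Let τ ∈ (0,1), μ ∈ ℝ, σ > 0, let f denote the density of N(μ, σ²), and suppose 0 is the τ-quantile of N(μ, σ²), i.e. the N(μ, σ²) measure of (-∞, 0] equals τ. Then f(0) > 0 and the ratio α(τ) := [f″(0)]² / f(0) equals (1/σ⁵)·[(Φ⁻¹(τ))² - 1]²·φ(Φ⁻¹(τ)). -/

import Mathlib

open MeasureTheory ProbabilityTheory Real Set

/-- The standard normal density `φ(x) = (2π)^{-1/2} e^{-x²/2}`. -/
noncomputable def stdNormalPDF (x : ℝ) : ℝ :=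
  (Real.sqrt (2 * Real.pi))⁻¹ * Real.exp (-x ^ 2 / 2)

/-- The standard normal CDF `Φ`. -/
noncomputable def stdNormalCDF (x : ℝ) : ℝ :=
  ∫ t in Set.Iic x, stdNormalPDF t

/-- The standard normal quantile function `Φ⁻¹` (the inverse of `Φ`). -/
noncomputable def stdNormalQuantile : ℝ → ℝ :=
  Function.invFun stdNormalCDF

/-- The density of the `N(m, s²)` distribution:
`f(x) = (2πs²)^{-1/2} e^{-(x-m)²/(2s²)}`. -/
noncomputable def gaussDensity (m s x : ℝ) : ℝ :=
  (Real.sqrt (2 * Real.pi * s ^ 2))⁻¹ * Real.exp (-(x - m) ^ 2 / (2 * s ^ 2))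

lemma stdNormalPDF_eq : stdNormalPDF = gaussianPDFReal 0 1 := by
  funext x
  simp [stdNormalPDF, gaussianPDFReal]

lemma stdNormalCDF_eq (x : ℝ) : gaussianReal 0 1 (Set.Iic x) = ENNReal.ofReal (stdNormalCDF x) := by
  rw [gaussianReal_apply_eq_integral 0 one_ne_zero, stdNormalCDF, stdNormalPDF_eq]

lemma stdNormalCDF_strictMono : StrictMono stdNormalCDF := by
  intro x y hxy
  have hi : Integrable stdNormalPDF := by
    rw [stdNormalPDF_eq]; exact integrable_gaussianPDFReal 0 1
  have h := intervalIntegral.integral_Iic_sub_Iic (μ := volume) (f := stdNormalPDF)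
    (a := x) (b := y) hi.integrableOn hi.integrableOn
  have hp : 0 < ∫ t in x..y, stdNormalPDF t := by
    apply intervalIntegral.intervalIntegral_pos_of_pos hi.intervalIntegrable _ hxy
    intro t
    unfold stdNormalPDF
    positivity
  unfold stdNormalCDF
  linarith

lemma gaussDensity_hasDerivAt (m s x : ℝ) (hs : 0 < s) :
    HasDerivAt (gaussDensity m s) (-(x - m) / s ^ 2 * gaussDensity m s x) x := by
  have h1 : HasDerivAt (fun x : ℝ => -(x - m) ^ 2 / (2 * s ^ 2)) (-(x - m) / s ^ 2) x := by
    have := ((((hasDerivAt_id x).sub_const m).pow 2).neg).div_const (2 * s ^ 2)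
    refine this.congr_deriv ?_
    simp
    field_simp
    ring
  refine ((h1.exp).const_mul ((Real.sqrt (2 * Real.pi * s ^ 2))⁻¹)).congr_deriv ?_
  unfold gaussDensity
  ring

lemma gaussDensity_deriv2 (m s x : ℝ) (hs : 0 < s) :
    deriv (deriv (gaussDensity m s)) x
      = ((x - m) ^ 2 / s ^ 4 - 1 / s ^ 2) * gaussDensity m s x := by
  have h : deriv (gaussDensity m s) = fun x => -(x - m) / s ^ 2 * gaussDensity m s x :=
    funext fun x => (gaussDensity_hasDerivAt m s x hs).deriv
  rw [h]
  have h2 : HasDerivAt (fun x : ℝ => -(x - m) / s ^ 2) (-1 / s ^ 2) x :=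
    (((hasDerivAt_id x).sub_const m).neg).div_const (s ^ 2)
  refine (h2.mul (gaussDensity_hasDerivAt m s x hs)).deriv.trans ?_
  field_simp
  ring

lemma quantile_eq (τ μ σ : ℝ) (hτ : τ ∈ Set.Ioo (0 : ℝ) 1) (hσ : 0 < σ)
    (hq : (gaussianReal μ ((σ ^ 2).toNNReal)) (Set.Iic 0) = ENNReal.ofReal τ) :
    stdNormalQuantile τ = -μ / σ := by
  have h1 : gaussianReal μ ((σ ^ 2).toNNReal)
      = ((gaussianReal 0 1).map (σ * ·)).map (· + μ) := by
    rw [gaussianReal_map_const_mul, gaussianReal_map_add_const]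
    congr 1
    · simp
    · ext
      simp [sq_nonneg]
  rw [h1, Measure.map_apply (by fun_prop) measurableSet_Iic,
    Measure.map_apply (by fun_prop) (measurableSet_Iic.preimage (by fun_prop))] at hq
  have h2 : (σ * ·) ⁻¹' ((· + μ) ⁻¹' Set.Iic (0 : ℝ)) = Set.Iic (-μ / σ) := by
    ext x
    simp only [Set.mem_preimage, Set.mem_Iic]
    rw [le_div_iff₀ hσ]
    constructor <;> intro h <;> linarith
  rw [h2, stdNormalCDF_eq] at hq
  have h3 : stdNormalCDF (-μ / σ) = τ := by
    have h0 : 0 ≤ stdNormalCDF (-μ / σ) := by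
      unfold stdNormalCDF
      apply integral_nonneg
      intro t
      simp only [Pi.zero_apply, stdNormalPDF]
      positivity
    exact (ENNReal.ofReal_eq_ofReal_iff h0 hτ.1.le).1 hq
  rw [← h3]
  exact Function.leftInverse_invFun stdNormalCDF_strictMono.injective _

/-- Key identity of Proposition 1: if `0` is the `τ`-quantile of `N(μ, σ²)` with density `f`,
then `f(0) > 0` and `α(τ) = [f″(0)]²/f(0) = (1/σ⁵)·[(Φ⁻¹(τ))² - 1]²·φ(Φ⁻¹(τ))`. -/
theorem stmt_7 (τ μ σ : ℝ) (hτ : τ ∈ Set.Ioo (0 : ℝ) 1) (hσ : 0 < σ)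
    (f : ℝ → ℝ) (hf : f = gaussDensity μ σ)
    (hq : (ProbabilityTheory.gaussianReal μ ((σ ^ 2).toNNReal)) (Set.Iic 0)
      = ENNReal.ofReal τ) :
    0 < f 0 ∧
    (deriv (deriv f) 0) ^ 2 / f 0
      = (1 / σ ^ 5) * ((stdNormalQuantile τ) ^ 2 - 1) ^ 2
        * stdNormalPDF (stdNormalQuantile τ) := by
  subst hf
  have hpos : 0 < gaussDensity μ σ 0 := by
    unfold gaussDensity
    positivity
  refine ⟨hpos, ?_⟩
  have h0 : gaussDensity μ σ 0 = stdNormalPDF (-μ / σ) / σ := by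
    unfold gaussDensity stdNormalPDF
    rw [Real.sqrt_mul (by positivity), Real.sqrt_sq hσ.le]
    have : -(0 - μ) ^ 2 / (2 * σ ^ 2) = -(-μ / σ) ^ 2 / 2 := by
      field_simp
      try ring
    rw [this]
    field_simp
  rw [quantile_eq τ μ σ hτ hσ hq, gaussDensity_deriv2 μ σ 0 hσ]
  have h4 : stdNormalPDF (-μ / σ) = σ * gaussDensity μ σ 0 := by
    rw [h0]; field_simp
  rw [h4]
  field_simp
  try ring
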